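/- Let T be a tree with exactly three pendant vertices u1, u2, u3 and a major vertex m such that d(u1,m) ≡ 1 mod 3 and d(u2,m) ≡ 1 mod 3. Then there exists an eigenvector x of the Laplacian matrix L(T) corresponding to the eigenvalue 1 such that for every k ∈ {1,2,3} and every vertex v on the path P_{u_k,m} from u_k to m, if d(v,u_k) ≡ 1 mod 3 then x(v) = 0. -/

import Mathlib

/-!
The degree sum formula forces every vertex of `T` other than `m` to have degree at most two, so
`T` consists of three paths (legs) glued at `m`. For an eigenvector with eigenvalue `1`, the
equation at a vertex of degree two is the recursion `x (j + 2) = x (j + 1) - x j` along the leg;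
its solution `legSeq` with initial values `0, 1` vanishes exactly at the multiples of three.

For a leg from `m` to `u` of length `≡ 1 (mod 3)` let `legVec` be the vector that is
`legSeq (d(m, ·))` on the leg and zero elsewhere. It satisfies the eigenvector equation at every
vertex except `m`, where the defect is `-1`, independently of the leg (`legVec_equation`). Hence
the difference of the vectors of the legs of `u₁` and `u₂` is an eigenvector. It vanishes where
required because distinct legs meet only in `m` (`legs_meet_only_at_center`).
-/

/-! ### Definitions used in the statement -/

open SimpleGraph Matrix

variable {V : Type*}

/-- A pendant vertex: a vertex of degree one. -/
def IsPendant (G : SimpleGraph V) (v : V) : Prop := (G.neighborSet v).ncard = 1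

/-- A major vertex: a vertex of degree at least three. -/
def IsMajor (G : SimpleGraph V) (v : V) : Prop := 3 ≤ (G.neighborSet v).ncard

/-- `v` lies on the (unique, in a tree) path between `u` and `w`. -/
def OnPath (G : SimpleGraph V) (u w v : V) : Prop :=
  G.dist u v + G.dist v w = G.dist u w

/-- The number of pendant vertices of a graph. -/
noncomputable def numPendant (G : SimpleGraph V) : ℕ :=
  Nat.card {v : V // IsPendant G v}

/-- The Laplacian matrix `D - A` over `ℝ`. -/
noncomputable def lapMat [Fintype V] (G : SimpleGraph V) : Matrix V V ℝ :=
  letI := Classical.decEq V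
  letI : DecidableRel G.Adj := Classical.decRel _
  G.lapMatrix ℝ

/-- The signless Laplacian matrix `D + A` over `ℝ`. -/
noncomputable def signlessLapMat [Fintype V] (G : SimpleGraph V) : Matrix V V ℝ :=
  letI := Classical.decEq V
  letI : DecidableRel G.Adj := Classical.decRel _
  G.degMatrix ℝ + G.adjMatrix ℝ

/-- The multiplicity of `μ` as an eigenvalue of the Laplacian matrix of `G`. -/
noncomputable def lapMult [Finite V] (G : SimpleGraph V) (μ : ℝ) : ℕ :=
  letI := Fintype.ofFinite V
  letI := Classical.decEq V
  Module.finrank ℝ (Module.End.eigenspace (Matrix.toLin' (lapMat G)) μ)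

/-- `μ` is an eigenvalue of the Laplacian matrix of `G`. -/
def HasLapEigen [Finite V] (G : SimpleGraph V) (μ : ℝ) : Prop :=
  letI := Fintype.ofFinite V
  ∃ x : V → ℝ, x ≠ 0 ∧ lapMat G *ᵥ x = μ • x

/-- Membership in the class `𝒬`: a tree in which any two distinct pendant vertices are
at distance `≡ 2 (mod 3)`. -/
def InQ [Finite V] (G : SimpleGraph V) : Prop :=
  G.IsTree ∧ ∀ u v : V, IsPendant G u → IsPendant G v → u ≠ v → G.dist u v % 3 = 2

/-- A node of a tree: a vertex at distance `≡ 1 (mod 3)` from every pendant vertex. -/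
def IsNode (G : SimpleGraph V) (η : V) : Prop :=
  ∀ u : V, IsPendant G u → G.dist η u % 3 = 1

/-- Membership in the class `𝒫`: a path on `n` vertices with `n ≡ 2 (mod 3)`. -/
def InP [Finite V] (G : SimpleGraph V) : Prop :=
  G.IsTree ∧ (∀ v : V, (G.neighborSet v).ncard ≤ 2) ∧ Nat.card V % 3 = 2

/-- The induced subgraph on `S` is a tree of class `𝒬` and `b ∈ S` is a node of it. -/
def NodeAttach [Finite V] (T : SimpleGraph V) (S : Set V) (b : V) : Prop :=
  ∃ hb : b ∈ S, InQ (T.induce S) ∧ IsNode (T.induce S) ⟨b, hb⟩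

/-- The induced subgraph on `S` is a path of class `𝒫` and `b ∈ S` is a pendant vertex
of it. -/
def PendantAttach [Finite V] (T : SimpleGraph V) (S : Set V) (b : V) : Prop :=
  ∃ hb : b ∈ S, InP (T.induce S) ∧ IsPendant (T.induce S) ⟨b, hb⟩

/-- The tree `T` is obtained from a tree `H` consisting of three internally disjoint
paths `P_{u j, m}` (`j = 0,1,2`) joined at `m`, whose three leg lengths satisfy `cond`,
together with trees `T i` (`i : Fin k`) of class `𝒬 ∪ 𝒫` (realized as the induced
subgraphs on the sets `S i`), by identifying for each `i` a vertex `a i` of `H`, lying on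
some `P_{u j, m}` with `d(a i, u j) ≡ 1 (mod 3)`, with a vertex `b i` of `T i` which is a
node of `T i` if `T i ∈ 𝒬` and a pendant vertex of `T i` if `T i ∈ 𝒫`. -/
def InGammaWith [Finite V] (T : SimpleGraph V) (cond : ℕ → ℕ → ℕ → Prop) : Prop :=
  ∃ (m : V) (u : Fin 3 → V) (k : ℕ) (a : Fin k → V) (S : Fin k → Set V),
    T.IsTree ∧
    Function.Injective u ∧
    (∀ j, u j ≠ m) ∧
    (∀ j j', j ≠ j' → ∀ v, OnPath T (u j) m v → OnPath T (u j') m v → v = m) ∧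
    cond (T.dist (u 0) m) (T.dist (u 1) m) (T.dist (u 2) m) ∧
    (∀ i, ∃ j, OnPath T (u j) m (a i) ∧ T.dist (a i) (u j) % 3 = 1) ∧
    (∀ i, S i ∩ {v | ∃ j, OnPath T (u j) m v} = {a i}) ∧
    (∀ i i', i ≠ i' → ∀ v ∈ S i ∩ S i', v = a i ∧ v = a i') ∧
    (∀ v, (∃ j, OnPath T (u j) m v) ∨ ∃ i, v ∈ S i) ∧
    (∀ v w, T.Adj v w →
      ((∃ j, OnPath T (u j) m v) ∧ (∃ j, OnPath T (u j) m w)) ∨ ∃ i, v ∈ S i ∧ w ∈ S i) ∧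
    (∀ i, NodeAttach T (S i) (a i) ∨ PendantAttach T (S i) (a i))

/-- The class `Γ_A`: base tree in `Ω_A`. -/
def InGammaA [Finite V] (T : SimpleGraph V) : Prop :=
  InGammaWith T (fun d₁ d₂ d₃ => d₁ % 3 = 1 ∧ d₂ % 3 = 1 ∧ d₃ % 3 ≠ 1)

/-- The class `Γ_B`: base tree in `Ω_B`. -/
def InGammaB [Finite V] (T : SimpleGraph V) : Prop :=
  InGammaWith T (fun d₁ d₂ d₃ => d₁ % 3 = 2 ∧ d₂ % 3 = 0 ∧ d₃ % 3 = 0)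

/-- The class `Γ = Γ_A ∪ Γ_B`. -/
def InGamma [Finite V] (T : SimpleGraph V) : Prop := InGammaA T ∨ InGammaB T

/-! ### The sequence of values along a leg -/

/-- The sequence `0, 1, 1, 0, -1, -1, 0, …`: the values, as a function of the distance to the
centre, along a leg of a vector satisfying the eigenvector equation for the eigenvalue `1`. -/
def legSeq : ℕ → ℝ
  | 0 => 0
  | 1 => 1
  | n + 2 => legSeq (n + 1) - legSeq n

lemma legSeq_add_two (n : ℕ) : legSeq (n + 2) = legSeq (n + 1) - legSeq n := rfl

lemma legSeq_add_three (n : ℕ) : legSeq (n + 3) = -legSeq n := by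
  rw [legSeq_add_two (n + 1), legSeq_add_two n]; ring

lemma legSeq_three_mul (k : ℕ) : legSeq (3 * k) = 0 := by
  induction k with
  | zero => rfl
  | succ k ih => rw [Nat.mul_succ, legSeq_add_three, ih, neg_zero]

lemma legSeq_of_mod_eq_zero {n : ℕ} (h : n % 3 = 0) : legSeq n = 0 := by
  obtain ⟨k, rfl⟩ := Nat.dvd_of_mod_eq_zero h
  exact legSeq_three_mul k

lemma legSeq_three_mul_add_one (k : ℕ) : legSeq (3 * k + 1) ≠ 0 := by
  induction k with
  | zero => simp [legSeq]
  | succ k ih =>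
    rw [show 3 * (k + 1) + 1 = (3 * k + 1) + 3 by ring, legSeq_add_three]
    exact neg_ne_zero.mpr ih

lemma legSeq_ne_zero_of_mod_eq_one {n : ℕ} (h : n % 3 = 1) : legSeq n ≠ 0 := by
  rw [← Nat.div_add_mod n 3, h]
  exact legSeq_three_mul_add_one _

/-! ### Legs -/

/-- `a 0, …, a d` are the successive vertices of the path from `m` to `u`, where `d` is the
length of this path; the values of `a` beyond `d` are irrelevant. -/
structure IsLeg (T : SimpleGraph V) (m u : V) (d : ℕ) (a : ℕ → V) : Prop where
  zero : a 0 = m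
  last : a d = u
  adj : ∀ j < d, T.Adj (a j) (a (j + 1))
  dist : ∀ j ≤ d, T.dist m (a j) = j
  onPath : ∀ v, OnPath T u m v ↔ ∃ j ≤ d, a j = v

lemma exists_isLeg {T : SimpleGraph V} (hT : T.IsTree) (m u : V) :
    ∃ a, IsLeg T m u (T.dist m u) a := by
  obtain ⟨p, hp, hl⟩ := hT.connected.exists_path_of_dist m u
  have hdist : ∀ j ≤ T.dist m u,
      T.dist m (p.getVert j) = j ∧ T.dist (p.getVert j) u = T.dist m u - j := by
    intro j hj
    have e1 := dist_le (p.take j)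
    have e2 := dist_le (p.drop j)
    rw [Walk.take_length] at e1
    rw [Walk.drop_length] at e2
    have := hT.connected.dist_triangle (u := m) (v := p.getVert j) (w := u)
    omega
  refine ⟨p.getVert, p.getVert_zero, by rw [← hl]; exact p.getVert_length,
    fun j hj => p.adj_getVert_succ (by omega), fun j hj => (hdist j hj).1, fun v => ⟨?_, ?_⟩⟩
  · intro h
    unfold OnPath at h
    obtain ⟨q, hq⟩ := hT.connected.exists_walk_length_eq_dist m v
    obtain ⟨r, hr⟩ := hT.connected.exists_walk_length_eq_dist v u
    have hqr : (q.append r).IsPath := by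
      apply Walk.isPath_of_length_eq_dist
      rw [Walk.length_append, hq, hr, T.dist_comm (u := m) (v := u), ← h,
        T.dist_comm (u := m), T.dist_comm (u := v) (v := u)]
      ring
    -- the concatenated geodesics through `v` form the unique path of the tree from `m` to `u`
    have hpq : p = q.append r := congrArg Subtype.val
      (hT.isAcyclic.subsingleton_path m u |>.elim ⟨p, hp⟩ ⟨q.append r, hqr⟩)
    have hv : v ∈ p.support := by
      rw [hpq, Walk.mem_support_append_iff]
      exact Or.inl q.end_mem_support
    obtain ⟨n, hn, hn'⟩ := Walk.mem_support_iff_exists_getVert.mp hv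
    exact ⟨n, by omega, hn⟩
  · rintro ⟨j, hj, rfl⟩
    have := hdist j hj
    unfold OnPath
    rw [T.dist_comm (u := u), T.dist_comm (v := m), T.dist_comm (u := u)]
    omega

namespace IsLeg

variable {T : SimpleGraph V} {m u : V} {d : ℕ} {a : ℕ → V}

lemma index_eq (ha : IsLeg T m u d a) {i j : ℕ} (hi : i ≤ d) (hj : j ≤ d) (h : a i = a j) :
    i = j := by
  rw [← ha.dist i hi, h, ha.dist j hj]

/-- If all vertices except the centre have degree at most two, the neighbours on the leg of an
inner vertex of the leg are its only neighbours. -/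
lemma adj_inner [Finite V] (ha : IsLeg T m u d a)
    (hdeg : ∀ v ≠ m, (T.neighborSet v).ncard ≤ 2) {i : ℕ} (hi : i + 1 < d) :
    T.neighborSet (a (i + 1)) = {a i, a (i + 2)} := by
  have hne : a i ≠ a (i + 2) := fun h => by
    have := ha.index_eq (by omega) (by omega) h
    omega
  have hm : a (i + 1) ≠ m := fun h => by
    rw [← ha.zero] at h
    have := ha.index_eq (by omega) (by omega) h
    omega
  symm
  apply Set.eq_of_subset_of_ncard_le
  · rintro w (rfl | rfl)
    · exact (ha.adj i (by omega)).symm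
    · exact ha.adj (i + 1) hi
  · rw [Set.ncard_pair hne]
    exact hdeg _ hm
  · exact Set.toFinite _

lemma adj_last (ha : IsLeg T m u d a) (hu : IsPendant T u) {i : ℕ} (hi : i + 1 = d) :
    T.neighborSet u = {a i} := by
  obtain ⟨w, hw⟩ := Set.ncard_eq_one.mp hu
  have h : a i ∈ T.neighborSet u := by
    rw [← ha.last, ← hi]
    exact (ha.adj i (by omega)).symm
  rw [hw] at h ⊢
  rw [Set.mem_singleton_iff.mp h]

/-- A neighbour of a vertex of the leg lies on the leg, unless that vertex is the centre. -/
lemma index_of_adj [Finite V] (ha : IsLeg T m u d a) (hu : IsPendant T u)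
    (hdeg : ∀ v ≠ m, (T.neighborSet v).ncard ≤ 2) {j : ℕ} (hj : j + 1 ≤ d) {w : V}
    (hw : T.Adj (a (j + 1)) w) : w = a j ∨ (j + 2 ≤ d ∧ w = a (j + 2)) := by
  change w ∈ T.neighborSet _ at hw
  rcases hj.lt_or_eq with h | h
  · rw [ha.adj_inner hdeg h] at hw
    rcases hw with rfl | rfl
    · exact Or.inl rfl
    · exact Or.inr ⟨h, rfl⟩
  · rw [h, ha.last, ha.adj_last hu h] at hw
    exact Or.inl hw

end IsLeg

lemma legs_agree_outwards [Finite V] {T : SimpleGraph V} {m u u' : V} {d e : ℕ} {a b : ℕ → V}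
    (ha : IsLeg T m u d a) (hb : IsLeg T m u' e b) (hu' : IsPendant T u')
    (hdeg : ∀ v ≠ m, (T.neighborSet v).ncard ≤ 2) {j : ℕ} (hj : 0 < j) (hje : j ≤ e)
    (h : a j = b j) : ∀ k, j + k ≤ d → j + k ≤ e ∧ a (j + k) = b (j + k) := by
  intro k
  induction k with
  | zero => exact fun _ => ⟨hje, h⟩
  | succ k ih =>
    intro hk
    obtain ⟨h1, h2⟩ := ih (by omega)
    obtain ⟨i, hi⟩ : ∃ i, j + k = i + 1 := ⟨j + k - 1, by omega⟩
    rw [← Nat.add_assoc, hi] at hk ⊢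
    rw [hi] at h1 h2
    have hadj := ha.adj (i + 1) (by omega)
    rw [h2] at hadj
    rcases hb.index_of_adj hu' hdeg h1 hadj with h3 | h3
    · -- the outward neighbour along one leg is not the inward neighbour along the other
      have h4 := congrArg (T.dist m) h3
      rw [ha.dist _ hk, hb.dist _ (by omega)] at h4
      omega
    · exact h3

lemma legs_meet_only_at_center [Finite V] {T : SimpleGraph V} (hT : T.IsTree) {m u u' : V}
    (hu : IsPendant T u) (hu' : IsPendant T u') (hne : u ≠ u')
    (hdeg : ∀ v ≠ m, (T.neighborSet v).ncard ≤ 2) {v : V}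
    (h : OnPath T u m v) (h' : OnPath T u' m v) : v = m := by
  obtain ⟨a, ha⟩ := exists_isLeg hT m u
  obtain ⟨b, hb⟩ := exists_isLeg hT m u'
  obtain ⟨j, hj, rfl⟩ := (ha.onPath v).mp h
  obtain ⟨k, hk, hkj⟩ := (hb.onPath _).mp h'
  have hjk : k = j := by rw [← hb.dist k hk, hkj, ha.dist j hj]
  subst hjk
  rcases Nat.eq_zero_or_pos k with rfl | hpos
  · exact ha.zero
  -- past a common vertex other than the centre, each leg contains the other one
  obtain ⟨h1, h2⟩ := legs_agree_outwards ha hb hu' hdeg hpos hk hkj.symm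
    (T.dist m u - k) (by omega)
  obtain ⟨h3, -⟩ := legs_agree_outwards hb ha hu hdeg hpos hj hkj
    (T.dist m u' - k) (by omega)
  have h4 : k + (T.dist m u - k) = T.dist m u := by omega
  have h5 : T.dist m u = T.dist m u' := by omega
  rw [h4, ha.last, h5, hb.last] at h2
  exact absurd h2 hne

/-! ### The vector of a leg -/

open Classical in
/-- The vector supported on the path from `u` to `m` with values `legSeq` of the distance
to `m`. -/
noncomputable def legVec (T : SimpleGraph V) (m u : V) (v : V) : ℝ :=
  if OnPath T u m v then legSeq (T.dist m v) else 0

lemma IsLeg.legVec_apply {T : SimpleGraph V} {m u : V} {d : ℕ} {a : ℕ → V}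
    (ha : IsLeg T m u d a) {j : ℕ} (hj : j ≤ d) : legVec T m u (a j) = legSeq j := by
  rw [legVec, if_pos ((ha.onPath _).mpr ⟨j, hj, rfl⟩), ha.dist j hj]

lemma legVec_center (T : SimpleGraph V) (m u : V) : legVec T m u m = 0 := by
  simp [legVec, legSeq]

open Classical in
/-- The vector of a leg of length `≡ 1 (mod 3)` satisfies the eigenvector equation for the
eigenvalue `1` up to the defect `-1` at the centre. -/
lemma legVec_equation [Fintype V] {T : SimpleGraph V} (hT : T.IsTree) {m u : V}
    (hu : IsPendant T u) (hdeg : ∀ v ≠ m, (T.neighborSet v).ncard ≤ 2)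
    (hd : T.dist u m % 3 = 1) (v : V) :
    (T.degree v : ℝ) * legVec T m u v - ∑ w ∈ T.neighborFinset v, legVec T m u w
      = legVec T m u v - if v = m then 1 else 0 := by
  obtain ⟨a, ha⟩ := exists_isLeg hT m u
  rw [T.dist_comm] at hd
  by_cases hv : OnPath T u m v
  · obtain ⟨j, hj, rfl⟩ := (ha.onPath v).mp hv
    rcases j with _ | i
    · have hsum : ∑ w ∈ T.neighborFinset m, legVec T m u w = legVec T m u (a 1) := by
        apply Finset.sum_eq_single
        · intro w hw hw1
          rw [mem_neighborFinset] at hw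
          by_cases hP : OnPath T u m w
          · obtain ⟨k, hk, rfl⟩ := (ha.onPath w).mp hP
            have h1 := dist_eq_one_iff_adj.mpr hw
            rw [ha.dist k hk] at h1
            rw [h1] at hw1
            exact absurd rfl hw1
          · rw [legVec, if_neg hP]
        · intro h
          refine absurd ?_ h
          rw [mem_neighborFinset, ← ha.zero]
          exact ha.adj 0 (by omega)
      rw [ha.zero, hsum, legVec_center, ha.legVec_apply (by omega)]
      simp [legSeq]
    · have hm : a (i + 1) ≠ m := fun h => by
        rw [← ha.zero] at h
        have := ha.index_eq (by omega) (by omega) h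
        omega
      rw [if_neg hm, ha.legVec_apply hj]
      rcases hj.lt_or_eq with h | h
      · have hne : a i ≠ a (i + 2) := fun h => by
          have := ha.index_eq (by omega) (by omega) h
          omega
        have hN : T.neighborFinset (a (i + 1)) = {a i, a (i + 2)} := by
          ext w
          rw [mem_neighborFinset, ← mem_neighborSet, ha.adj_inner hdeg h]
          simp
        rw [← card_neighborFinset_eq_degree, hN, Finset.card_pair hne, Finset.sum_pair hne,
          ha.legVec_apply (by omega), ha.legVec_apply (by omega), legSeq_add_two]
        push_cast
        ring
      · have hN : T.neighborFinset (a (i + 1)) = {a i} := by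
          ext w
          rw [mem_neighborFinset, ← mem_neighborSet, h, ha.last, ha.adj_last hu h]
          simp
        rw [← card_neighborFinset_eq_degree, hN, Finset.card_singleton, Finset.sum_singleton,
          ha.legVec_apply (by omega), legSeq_of_mod_eq_zero (n := i) (by omega)]
        simp
  · have hm : v ≠ m := by
      rintro rfl
      exact hv (by simp [OnPath])
    have hsum : ∑ w ∈ T.neighborFinset v, legVec T m u w = 0 := by
      apply Finset.sum_eq_zero
      intro w hw
      rw [mem_neighborFinset] at hw
      by_cases hP : OnPath T u m w
      · obtain ⟨k, hk, rfl⟩ := (ha.onPath w).mp hP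
        rcases k with _ | i
        · rw [ha.zero, legVec_center]
        · -- all neighbours of a vertex of the leg other than `m` lie on the leg
          refine absurd ((ha.onPath v).mpr ?_) hv
          rcases ha.index_of_adj hu hdeg hk hw.symm with h | h
          · exact ⟨i, by omega, h.symm⟩
          · exact ⟨i + 2, h.1, h.2.symm⟩
      · rw [legVec, if_neg hP]
    rw [hsum, if_neg hm]
    simp [legVec, hv]

/-! ### Degrees and the eigenvector -/

/-- Since `∑ (deg v - 2) = -2` in a tree, three pendant vertices and one vertex of degree at
least three leave no room for a further vertex of degree above two. -/
lemma degree_le_two_of_three_pendants [Fintype V] {T : SimpleGraph V} (hT : T.IsTree)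
    {u₁ u₂ u₃ m : V}
    (hpend : ∀ w : V, IsPendant T w → w ∈ ({u₁, u₂, u₃} : Set V))
    (hm : IsMajor T m) : ∀ v ≠ m, (T.neighborSet v).ncard ≤ 2 := by
  classical
  intro v hvm
  by_contra! hv
  have hcard : ∀ w, (T.neighborSet w).ncard = T.degree w := fun w => by
    rw [Set.ncard_eq_toFinset_card', ← card_neighborFinset_eq_degree]; rfl
  have : Nontrivial V := ⟨v, m, hvm⟩
  have hpos : ∀ w, 0 < T.degree w := fun w =>
    hT.connected.preconnected.degree_pos_of_nontrivial w
  have hsum := T.sum_degrees_eq_twice_card_edges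
  have hedge := hT.card_edgeFinset
  unfold IsMajor at hm
  rw [hcard] at hv hm
  set P : Finset V := {u₁, u₂, u₃} with hP
  have hPc : P.card ≤ 3 := Finset.card_le_three
  have hle : ∑ w : V, (2 + (if w = v then 1 else 0) + (if w = m then 1 else 0))
      ≤ ∑ w : V, (T.degree w + if w ∈ P then 1 else 0) := by
    apply Finset.sum_le_sum
    intro w _
    have h1 : T.degree w = 1 → w ∈ P := fun h => by
      have := hpend w (by rw [IsPendant, hcard, h])
      simpa [hP] using this
    have h0 := hpos w
    by_cases hwv : w = v
    · subst hwv
      simp only [hvm, if_true, if_false]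
      omega
    · by_cases hwm : w = m
      · subst hwm
        simp only [hwv, if_true, if_false]
        omega
      · simp only [hwv, hwm, if_false]
        by_cases hw : T.degree w = 1
        · simp [h1 hw, hw]
        · omega
  simp only [Finset.sum_add_distrib, Finset.sum_const, Finset.card_univ, smul_eq_mul,
    Finset.sum_ite_eq', Finset.mem_univ, if_true, Finset.sum_ite_mem, Finset.univ_inter,
    mul_one] at hle
  omega

/-- Let `T` be a tree with exactly three pendant vertices
`u₁, u₂, u₃` and a major vertex `m` such that `d(u₁,m) ≡ 1` and `d(u₂,m) ≡ 1 (mod 3)`.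
Then there exists an eigenvector `x` of the Laplacian matrix `L(T)` for the eigenvalue
`1` such that for every `k ∈ {1,2,3}` and every vertex `w` on the path `P_{u_k,m}`, if
`d(w,u_k) ≡ 1 (mod 3)` then `x w = 0`. -/
theorem stmt_13 {V : Type*} [Fintype V] (T : SimpleGraph V) (hT : T.IsTree)
    (u₁ u₂ u₃ m : V) (hdist : List.Pairwise (· ≠ ·) [u₁, u₂, u₃])
    (h₁ : IsPendant T u₁) (h₂ : IsPendant T u₂) (h₃ : IsPendant T u₃)
    (hpend : ∀ w : V, IsPendant T w → w ∈ ({u₁, u₂, u₃} : Set V))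
    (hm : IsMajor T m)
    (hd₁ : T.dist u₁ m % 3 = 1) (hd₂ : T.dist u₂ m % 3 = 1) :
    ∃ x : V → ℝ, x ≠ 0 ∧ lapMat T *ᵥ x = x ∧
      ∀ u ∈ ({u₁, u₂, u₃} : Set V), ∀ w : V,
        OnPath T u m w → T.dist w u % 3 = 1 → x w = 0 := by
  classical
  have hdeg := degree_le_two_of_three_pendants hT hpend hm
  obtain ⟨h12, h13, h23⟩ : u₁ ≠ u₂ ∧ u₁ ≠ u₃ ∧ u₂ ≠ u₃ := by
    simp only [List.pairwise_cons, List.mem_cons] at hdist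
    exact ⟨hdist.1 _ (by simp), hdist.1 _ (by simp), hdist.2.1 _ (by simp)⟩
  refine ⟨fun v => legVec T m u₁ v - legVec T m u₂ v, ?_, ?_, ?_⟩
  · intro h0
    have hu : u₁ ≠ m := by
      rintro rfl
      unfold IsPendant at h₁
      unfold IsMajor at hm
      omega
    have h2 : ¬ OnPath T u₂ m u₁ := fun h =>
      hu (legs_meet_only_at_center hT h₁ h₂ h12 hdeg (by simp [OnPath]) h)
    have h := congrFun h0 u₁
    simp only [legVec, if_neg h2, if_pos (show OnPath T u₁ m u₁ by simp [OnPath]),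
      Pi.zero_apply, sub_zero] at h
    exact legSeq_ne_zero_of_mod_eq_one (by rwa [T.dist_comm]) h
  · ext v
    have e1 := legVec_equation hT h₁ hdeg hd₁ v
    have e2 := legVec_equation hT h₂ hdeg hd₂ v
    rw [lapMat, lapMatrix_mulVec_apply, Finset.sum_sub_distrib]
    linarith
  · -- on the legs of length `≡ 1`, distance `≡ 1` from the end is distance `≡ 0` from `m`
    have key : ∀ u w, T.dist u m % 3 = 1 → OnPath T u m w → T.dist w u % 3 = 1 →
        legSeq (T.dist m w) = 0 := by
      intro u w hd hP hw
      apply legSeq_of_mod_eq_zero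
      unfold OnPath at hP
      rw [T.dist_comm] at hw ⊢
      omega
    have vanish : ∀ w u, legSeq (T.dist m w) = 0 → legVec T m u w = 0 := by
      intro w u h
      simp [legVec, h]
    rintro u (rfl | rfl | rfl) w hP hw
    · have := key _ w hd₁ hP hw
      simp [vanish w _ this]
    · have := key _ w hd₂ hP hw
      simp [vanish w _ this]
    · by_cases hwm : w = m
      · simp [hwm, legVec_center]
      · have n1 : ¬ OnPath T u₁ m w := fun h =>
          hwm (legs_meet_only_at_center hT h₁ h₃ h13 hdeg h hP)
        have n2 : ¬ OnPath T u₂ m w := fun h =>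
          hwm (legs_meet_only_at_center hT h₂ h₃ h23 hdeg h hP)
        simp [legVec, n1, n2]
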